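/- Let X ~ N(m, Σ) on ℝ^n with Σ symmetric positive definite, W ~ N(0, R) on ℝ^m with R symmetric positive definite, X and W independent, Y := HX + W, and K := ΣHᵀ(HΣHᵀ+R)⁻¹. Let X̄ and W̄ be independent copies of X and W respectively (with X̄, W̄, and (X,W) mutually independent), set Ȳ := HX̄ + W̄, and define X̄_{|y} := X̄ + K(y − Ȳ). Then for P_Y-almost every y, the law of X̄_{|y} equals the conditional distribution P_{X|Y}(·|y) of X given Y = y; equivalently, y ↦ law(X̄ + K(y − Ȳ)) is a regular conditional distribution of X given Y. -/

import Mathlib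

open MeasureTheory ProbabilityTheory Matrix
open scoped Matrix ENNReal

/-- The multivariate Gaussian measure `N(m, Σ)` on `ℝ^n`, defined through its density
with respect to Lebesgue measure. -/
noncomputable def mvGaussian {n : ℕ} (m : Fin n → ℝ) (S : Matrix (Fin n) (Fin n) ℝ) :
    Measure (Fin n → ℝ) :=
  volume.withDensity fun x =>
    ENNReal.ofReal ((Real.sqrt ((2 * Real.pi) ^ n * S.det))⁻¹ *
      Real.exp (-(1 / 2) * ((x - m) ⬝ᵥ (S⁻¹).mulVec (x - m))))

/-! If `(X, Y)` is jointly Gaussian and `K` solves the normal equation `K Cov(Y) = Cov(X, Y)`, then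
the residual `X - K Y` is uncorrelated with `Y`, hence independent of it. Writing
`X = (X - K Y) + K Y`, conditioning on `Y = y` freezes the second summand at `K y` and leaves the
law of the first one unchanged, so the conditional law is that of `X + K (y - Y)`; this depends only
on the joint law of `(X, Y)` and may therefore be simulated from a copy. For `Y = H X + W` the
Kalman gain solves the normal equation. -/

lemma lintegral_fin_prod_eq_prod {n : ℕ} {E : Fin n → Type*} [∀ i, MeasurableSpace (E i)]
    {μ : (i : Fin n) → Measure (E i)} [∀ i, SigmaFinite (μ i)]
    {f : (i : Fin n) → E i → ℝ≥0∞} (hf : ∀ i, Measurable (f i)) :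
    ∫⁻ x, ∏ i, f i (x i) ∂Measure.pi μ = ∏ i, ∫⁻ x, f i x ∂μ i := by
  induction n with
  | zero => simp
  | succ n ih =>
    have htail : Measurable fun x : (i : Fin n) → E i.succ => ∏ i, f i.succ (x i) :=
      Finset.measurable_prod _ fun i _ => (hf i.succ).comp (measurable_pi_apply i)
    calc ∫⁻ x, ∏ i, f i (x i) ∂Measure.pi μ
        = ∫⁻ q : E 0 × ((i : Fin n) → E i.succ), f 0 q.1 * ∏ i, f i.succ (q.2 i)
            ∂(μ 0).prod (Measure.pi fun i => μ i.succ) := by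
          rw [← (measurePreserving_piFinSuccAbove μ 0).symm.lintegral_comp_emb
            (MeasurableEquiv.measurableEmbedding _)]
          simp only [Fin.prod_univ_succ]
          rfl
      _ = (∫⁻ x, f 0 x ∂μ 0) * ∏ i : Fin n, ∫⁻ x, f i.succ x ∂μ i.succ := by
          rw [← ih fun i => hf i.succ]
          exact lintegral_prod_mul (hf 0).aemeasurable htail.aemeasurable
      _ = ∏ i, ∫⁻ x, f i x ∂μ i := (Fin.prod_univ_succ fun i => ∫⁻ x, f i x ∂μ i).symm

lemma lintegral_fintype_prod_eq_prod {ι : Type*} [Fintype ι] {E : ι → Type*}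
    [∀ i, MeasurableSpace (E i)] {μ : (i : ι) → Measure (E i)} [∀ i, SigmaFinite (μ i)]
    {f : (i : ι) → E i → ℝ≥0∞} (hf : ∀ i, Measurable (f i)) :
    ∫⁻ x, ∏ i, f i (x i) ∂Measure.pi μ = ∏ i, ∫⁻ x, f i x ∂μ i := by
  let e := (Fintype.equivFin ι).symm
  rw [← (measurePreserving_piCongrLeft μ e).lintegral_comp_emb
    (MeasurableEquiv.measurableEmbedding _)]
  simp_rw [← e.prod_comp, MeasurableEquiv.coe_piCongrLeft, Equiv.piCongrLeft_apply_apply]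
  exact lintegral_fin_prod_eq_prod fun i => hf (e i)

lemma pi_withDensity {ι : Type*} [Fintype ι] {E : ι → Type*}
    [∀ i, MeasurableSpace (E i)] {μ : (i : ι) → Measure (E i)} [∀ i, SigmaFinite (μ i)]
    {f : (i : ι) → E i → ℝ≥0∞} (hf : ∀ i, Measurable (f i))
    [∀ i, SigmaFinite ((μ i).withDensity (f i))] :
    Measure.pi (fun i => (μ i).withDensity (f i)) =
      (Measure.pi μ).withDensity fun x => ∏ i, f i (x i) := by
  refine Measure.pi_eq fun s hs => ?_
  rw [withDensity_apply _ (MeasurableSet.univ_pi hs), Measure.restrict_pi_pi,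
    lintegral_fintype_prod_eq_prod hf]
  exact Finset.prod_congr rfl fun i _ => (withDensity_apply _ (hs i)).symm

lemma prod_gaussianPDFReal_zero_one {n : ℕ} (x : Fin n → ℝ) :
    ∏ i, gaussianPDFReal 0 1 (x i) =
      (√((2 * Real.pi) ^ n))⁻¹ * Real.exp (-(1 / 2) * (x ⬝ᵥ x)) := by
  have hconst : √((2 * Real.pi) ^ n) = √(2 * Real.pi) ^ n := by
    rw [Real.sqrt_eq_iff_mul_self_eq (by positivity) (by positivity), ← mul_pow,
      Real.mul_self_sqrt (by positivity)]
  have hexp : ∑ i, -(x i) ^ 2 / 2 = -(1 / 2) * (x ⬝ᵥ x) := by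
    rw [dotProduct, Finset.mul_sum]
    exact Finset.sum_congr rfl fun i _ => by ring
  simp only [gaussianPDFReal, Finset.prod_mul_distrib, ← Real.exp_sum, sub_zero, NNReal.coe_one,
    mul_one, hexp, hconst, Finset.prod_const, Finset.card_univ, Fintype.card_fin, inv_pow]

lemma mvGaussian_zero_one (n : ℕ) :
    mvGaussian 0 (1 : Matrix (Fin n) (Fin n) ℝ) = Measure.pi fun _ => gaussianReal 0 1 := by
  have : SigmaFinite ((volume : Measure ℝ).withDensity (gaussianPDF 0 1)) := by
    rw [← gaussianReal_of_var_ne_zero 0 one_ne_zero]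
    infer_instance
  simp only [gaussianReal_of_var_ne_zero 0 one_ne_zero]
  rw [pi_withDensity fun _ => measurable_gaussianPDF 0 1, ← volume_pi, mvGaussian]
  congr 1 with x
  simp only [gaussianPDF]
  rw [← ENNReal.ofReal_prod_of_nonneg fun i _ => gaussianPDFReal_nonneg 0 1 (x i),
    prod_gaussianPDFReal_zero_one, det_one, inv_one, one_mulVec, mul_one, sub_zero]

lemma map_withDensity_comp {α β : Type*} [MeasurableSpace α] [MeasurableSpace β] {μ : Measure α}
    {φ : α → β} (hφ : Measurable φ) {f : β → ℝ≥0∞} (hf : Measurable f) :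
    (μ.withDensity (f ∘ φ)).map φ = (μ.map φ).withDensity f := by
  ext s hs
  rw [Measure.map_apply hφ hs, withDensity_apply _ (hφ hs), withDensity_apply _ hs,
    setLIntegral_map hs hf hφ]
  rfl

lemma map_volume_add_mulVec {ι : Type*} [Fintype ι] [DecidableEq ι] (b : ι → ℝ)
    {A : Matrix ι ι ℝ} (hA : A.det ≠ 0) :
    (volume : Measure (ι → ℝ)).map (fun x => b + A *ᵥ x) = ENNReal.ofReal |A.det⁻¹| • volume := by
  rw [show (fun x => b + A *ᵥ x) = (b + ·) ∘ toLin' A from rfl,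
    ← Measure.map_map (measurable_const_add b) (Continuous.measurable (by fun_prop)),
    Real.map_matrix_volume_pi_eq_smul_volume_pi hA, Measure.map_smul, map_add_left_eq_self]

lemma mulVec_dotProduct_inv_mulVec_mulVec {ι : Type*} [Fintype ι] [DecidableEq ι]
    {A : Matrix ι ι ℝ} (hA : A.det ≠ 0) (S : Matrix ι ι ℝ) (u : ι → ℝ) :
    (A *ᵥ u) ⬝ᵥ (A * S * Aᵀ)⁻¹ *ᵥ (A *ᵥ u) = u ⬝ᵥ S⁻¹ *ᵥ u := by
  have hA' : IsUnit A.det := hA.isUnit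
  have hAT : IsUnit Aᵀ.det := by rwa [det_transpose]
  have hinv : Aᵀ * ((A * S * Aᵀ)⁻¹ * A) = S⁻¹ := by
    rw [Matrix.mul_inv_rev, Matrix.mul_inv_rev, Matrix.mul_assoc, Matrix.mul_assoc,
      nonsing_inv_mul _ hA', Matrix.mul_one, mul_nonsing_inv_cancel_left _ _ hAT]
  rw [mulVec_mulVec, ← vecMul_transpose, ← dotProduct_mulVec, mulVec_mulVec, hinv]

/-- The density of `mvGaussian m S` with respect to Lebesgue measure, named so that its behaviour
under affine changes of variables can be stated pointwise. -/
noncomputable def mvGaussianPDF {n : ℕ} (m : Fin n → ℝ) (S : Matrix (Fin n) (Fin n) ℝ)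
    (x : Fin n → ℝ) : ℝ≥0∞ :=
  ENNReal.ofReal ((√((2 * Real.pi) ^ n * S.det))⁻¹ *
    Real.exp (-(1 / 2) * ((x - m) ⬝ᵥ S⁻¹ *ᵥ (x - m))))

lemma mvGaussian_eq_withDensity {n : ℕ} (m : Fin n → ℝ) (S : Matrix (Fin n) (Fin n) ℝ) :
    mvGaussian m S = volume.withDensity (mvGaussianPDF m S) := rfl

lemma measurable_mvGaussianPDF {n : ℕ} (m : Fin n → ℝ) (S : Matrix (Fin n) (Fin n) ℝ) :
    Measurable (mvGaussianPDF m S) := by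
  unfold mvGaussianPDF
  fun_prop

lemma mvGaussianPDF_add_mulVec {n : ℕ} (m b : Fin n → ℝ) (S : Matrix (Fin n) (Fin n) ℝ)
    {A : Matrix (Fin n) (Fin n) ℝ} (hA : A.det ≠ 0) (x : Fin n → ℝ) :
    mvGaussianPDF (b + A *ᵥ m) (A * S * Aᵀ) (b + A *ᵥ x) =
      ENNReal.ofReal |A.det⁻¹| * mvGaussianPDF m S x := by
  have hdet : √((2 * Real.pi) ^ n * (A * S * Aᵀ).det) = |A.det| * √((2 * Real.pi) ^ n * S.det) := by
    rw [← Real.sqrt_sq_eq_abs, ← Real.sqrt_mul (sq_nonneg _), det_mul, det_mul, det_transpose]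
    ring_nf
  have hquad : (b + A *ᵥ x - (b + A *ᵥ m)) ⬝ᵥ
      (A * S * Aᵀ)⁻¹ *ᵥ (b + A *ᵥ x - (b + A *ᵥ m)) = (x - m) ⬝ᵥ S⁻¹ *ᵥ (x - m) := by
    rw [add_sub_add_left_eq_sub, ← mulVec_sub, mulVec_dotProduct_inv_mulVec_mulVec hA]
  rw [mvGaussianPDF, mvGaussianPDF, hdet, hquad, ← ENNReal.ofReal_mul (abs_nonneg _), mul_inv,
    abs_inv, mul_assoc]

lemma map_mvGaussian_add_mulVec {n : ℕ} (m b : Fin n → ℝ) (S : Matrix (Fin n) (Fin n) ℝ)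
    {A : Matrix (Fin n) (Fin n) ℝ} (hA : A.det ≠ 0) :
    (mvGaussian m S).map (fun x => b + A *ᵥ x) = mvGaussian (b + A *ᵥ m) (A * S * Aᵀ) := by
  set g := mvGaussianPDF (b + A *ᵥ m) (A * S * Aᵀ)
  have hg : Measurable g := measurable_mvGaussianPDF _ _
  have hcancel : ENNReal.ofReal |A.det| * ENNReal.ofReal |A.det⁻¹| = 1 := by
    rw [← ENNReal.ofReal_mul (abs_nonneg _), abs_inv, mul_inv_cancel₀ (abs_ne_zero.mpr hA),
      ENNReal.ofReal_one]
  have hpull : mvGaussianPDF m S = (ENNReal.ofReal |A.det| • g) ∘ fun x => b + A *ᵥ x := by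
    ext x
    simp only [g, Function.comp_apply, Pi.smul_apply, smul_eq_mul,
      mvGaussianPDF_add_mulVec m b S hA, ← mul_assoc, hcancel, one_mul]
  rw [mvGaussian_eq_withDensity, hpull, map_withDensity_comp (by fun_prop) (hg.const_smul _),
    map_volume_add_mulVec b hA, withDensity_smul_measure, withDensity_smul _ hg, smul_smul,
    mul_comm, hcancel, one_smul, mvGaussian_eq_withDensity]

open scoped MatrixOrder in
lemma mvGaussian_eq_map_multivariateGaussian {n : ℕ} (m : Fin n → ℝ)
    {S : Matrix (Fin n) (Fin n) ℝ} (hS : S.PosDef) :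
    mvGaussian m S = (multivariateGaussian (WithLp.toLp 2 m) S).map WithLp.ofLp := by
  have hsq : CFC.sqrt S * CFC.sqrt S = S := CFC.sqrt_mul_sqrt_self _ hS.posSemidef.nonneg
  have hdet : (CFC.sqrt S).det ≠ 0 := by
    intro h
    apply hS.det_pos.ne'
    rw [← hsq, det_mul, h, zero_mul]
  have htranspose : (CFC.sqrt S)ᵀ = CFC.sqrt S := by
    rw [← conjTranspose_eq_transpose_of_trivial]
    exact (CFC.sqrt_nonneg S).isSelfAdjoint
  calc mvGaussian m S
      = (mvGaussian 0 1).map fun x => m + CFC.sqrt S *ᵥ x := by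
        rw [map_mvGaussian_add_mulVec _ _ _ hdet, mulVec_zero, add_zero, Matrix.mul_one,
          htranspose, hsq]
    _ = (multivariateGaussian (WithLp.toLp 2 m) S).map WithLp.ofLp := by
        rw [mvGaussian_zero_one, multivariateGaussian, ← map_pi_eq_stdGaussian,
          Measure.map_map (by fun_prop) (by fun_prop), Measure.map_map (by fun_prop) (by fun_prop)]
        rfl

lemma isGaussian_mvGaussian {n : ℕ} (m : Fin n → ℝ) {S : Matrix (Fin n) (Fin n) ℝ}
    (hS : S.PosDef) : IsGaussian (mvGaussian m S) := by
  rw [mvGaussian_eq_map_multivariateGaussian m hS]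
  exact isGaussian_map (PiLp.continuousLinearEquiv 2 ℝ fun _ : Fin n => ℝ).toContinuousLinearMap

lemma covariance_eval_mvGaussian {n : ℕ} (m : Fin n → ℝ) {S : Matrix (Fin n) (Fin n) ℝ}
    (hS : S.PosDef) (i j : Fin n) : cov[fun x => x i, fun x => x j; mvGaussian m S] = S i j := by
  have heval (k : Fin n) : Measurable fun x : Fin n → ℝ => x k := measurable_pi_apply k
  rw [mvGaussian_eq_map_multivariateGaussian m hS,
    covariance_map (heval i).aestronglyMeasurable (heval j).aestronglyMeasurable (by fun_prop)]
  exact covariance_eval_multivariateGaussian hS.posSemidef i j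

section CrossCovariance

variable {ι κ ν Ω : Type*} [MeasurableSpace Ω] {P : Measure Ω}

/-- The cross-covariance matrix `Cov(Xᵢ, Yⱼ)` of two random vectors under `P`; `Cov(X, X)` is the
covariance matrix of `X`. Coordinates range over arbitrary index types. -/
noncomputable def crossCovMatrix (X : Ω → ι → ℝ) (Y : Ω → κ → ℝ) (P : Measure Ω) : Matrix ι κ ℝ :=
  of fun i j => cov[fun ω => X ω i, fun ω => Y ω j; P]

lemma crossCovMatrix_apply (X : Ω → ι → ℝ) (Y : Ω → κ → ℝ) (i : ι) (j : κ) :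
    crossCovMatrix X Y P i j = cov[fun ω => X ω i, fun ω => Y ω j; P] := rfl

lemma transpose_crossCovMatrix (X : Ω → ι → ℝ) (Y : Ω → κ → ℝ) :
    (crossCovMatrix X Y P)ᵀ = crossCovMatrix Y X P := by
  ext j i
  exact covariance_comm _ _

variable [Fintype ι] [Fintype κ] {X X' : Ω → ι → ℝ} {Y : Ω → κ → ℝ}

lemma memLp_mulVec {r : ℝ≥0∞} [Fintype ν] (A : Matrix ν ι ℝ) (hX : MemLp X r P) :
    MemLp (fun ω => A *ᵥ X ω) r P :=
  hX.continuousLinearMap_comp A.mulVecLin.toContinuousLinearMap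

lemma crossCovMatrix_eq_zero_of_indepFun (h : IndepFun X Y P) (hX : MemLp X 2 P)
    (hY : MemLp Y 2 P) : crossCovMatrix X Y P = 0 := by
  ext i j
  exact (h.comp (measurable_pi_apply i) (measurable_pi_apply j)).covariance_eq_zero
    (hX.eval i) (hY.eval j)

variable [IsFiniteMeasure P]

lemma crossCovMatrix_add_left (hX : MemLp X 2 P) (hX' : MemLp X' 2 P) (hY : MemLp Y 2 P) :
    crossCovMatrix (fun ω => X ω + X' ω) Y P = crossCovMatrix X Y P + crossCovMatrix X' Y P := by
  ext i j
  exact covariance_add_left (hX.eval i) (hX'.eval i) (hY.eval j)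

lemma crossCovMatrix_sub_left (hX : MemLp X 2 P) (hX' : MemLp X' 2 P) (hY : MemLp Y 2 P) :
    crossCovMatrix (fun ω => X ω - X' ω) Y P = crossCovMatrix X Y P - crossCovMatrix X' Y P := by
  ext i j
  exact covariance_sub_left (hX.eval i) (hX'.eval i) (hY.eval j)

lemma crossCovMatrix_mulVec_left (A : Matrix ν ι ℝ) (hX : MemLp X 2 P) (hY : MemLp Y 2 P) :
    crossCovMatrix (fun ω => A *ᵥ X ω) Y P = A * crossCovMatrix X Y P := by
  ext i j
  simp only [crossCovMatrix_apply, mul_apply, mulVec, dotProduct]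
  rw [covariance_fun_sum_left (fun k => (hX.eval k).const_mul (A i k)) (hY.eval j)]
  exact Finset.sum_congr rfl fun k _ => covariance_const_mul_left (A i k)

lemma crossCovMatrix_mulVec_right (A : Matrix ν κ ℝ) (hX : MemLp X 2 P) (hY : MemLp Y 2 P) :
    crossCovMatrix X (fun ω => A *ᵥ Y ω) P = crossCovMatrix X Y P * Aᵀ := by
  rw [← transpose_crossCovMatrix, crossCovMatrix_mulVec_left A hY hX, transpose_mul,
    transpose_crossCovMatrix]

lemma crossCovMatrix_add_right {Y' : Ω → κ → ℝ} (hX : MemLp X 2 P) (hY : MemLp Y 2 P)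
    (hY' : MemLp Y' 2 P) :
    crossCovMatrix X (fun ω => Y ω + Y' ω) P = crossCovMatrix X Y P + crossCovMatrix X Y' P := by
  ext i j
  exact covariance_add_right (hX.eval i) (hY.eval j) (hY'.eval j)

variable {W : Ω → κ → ℝ}

lemma crossCovMatrix_mulVec_add (H : Matrix κ ι ℝ) (hXW : IndepFun X W P) (hX : MemLp X 2 P)
    (hW : MemLp W 2 P) :
    crossCovMatrix X (fun ω => H *ᵥ X ω + W ω) P = crossCovMatrix X X P * Hᵀ := by
  have hHX : MemLp (fun ω => H *ᵥ X ω) 2 P := memLp_mulVec H hX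
  rw [crossCovMatrix_add_right hX hHX hW, crossCovMatrix_mulVec_right H hX hX,
    crossCovMatrix_eq_zero_of_indepFun hXW hX hW, add_zero]

lemma crossCovMatrix_mulVec_add_self (H : Matrix κ ι ℝ) (hXW : IndepFun X W P) (hX : MemLp X 2 P)
    (hW : MemLp W 2 P) :
    crossCovMatrix (fun ω => H *ᵥ X ω + W ω) (fun ω => H *ᵥ X ω + W ω) P =
      H * crossCovMatrix X X P * Hᵀ + crossCovMatrix W W P := by
  have hHX : MemLp (fun ω => H *ᵥ X ω) 2 P := memLp_mulVec H hX
  have hWY : crossCovMatrix W (fun ω => H *ᵥ X ω + W ω) P = crossCovMatrix W W P := by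
    rw [crossCovMatrix_add_right hW hHX hW, crossCovMatrix_mulVec_right H hW hX,
      crossCovMatrix_eq_zero_of_indepFun hXW.symm hW hX, Matrix.zero_mul, zero_add]
  have hY : MemLp (fun ω => H *ᵥ X ω + W ω) 2 P := hHX.add hW
  rw [crossCovMatrix_add_left hHX hW hY, hWY, crossCovMatrix_mulVec_left H hX hY,
    crossCovMatrix_mulVec_add H hXW hX hW, Matrix.mul_assoc]

end CrossCovariance

lemma crossCovMatrix_of_hasLaw_mvGaussian {n : ℕ} {Ω : Type*} [MeasurableSpace Ω] {P : Measure Ω}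
    {X : Ω → Fin n → ℝ} {m : Fin n → ℝ} {S : Matrix (Fin n) (Fin n) ℝ} (hS : S.PosDef)
    (hX : HasLaw X (mvGaussian m S) P) : crossCovMatrix X X P = S := by
  ext i j
  exact (hX.covariance_fun_comp (measurable_pi_apply i).aemeasurable
    (measurable_pi_apply j).aemeasurable).trans (covariance_eval_mvGaussian m hS i j)

section Conditioning

lemma condDistrib_ae_eq_map_of_indepFun {Ω α β γ : Type*} [MeasurableSpace Ω]
    [MeasurableSpace α] [MeasurableSpace β] [MeasurableSpace γ] [StandardBorelSpace γ] [Nonempty γ]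
    {P : Measure Ω} [IsFiniteMeasure P] {Y : Ω → α} {Z : Ω → β} (hYZ : IndepFun Y Z P)
    (hY : AEMeasurable Y P) (hZ : AEMeasurable Z P) {f : α × β → γ} (hf : Measurable f) :
    ∀ᵐ y ∂P.map Y, condDistrib (fun ω => f (Y ω, Z ω)) Y P y = P.map fun ω => f (y, Z ω) := by
  let κ : Kernel α γ := (Kernel.id ×ₖ Kernel.const α (P.map Z)).map f
  have hκ (y : α) : κ y = (P.map Z).map fun z => f (y, z) := by
    rw [Kernel.map_apply _ hf, Kernel.prod_apply, Kernel.id_apply, Kernel.const_apply,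
      Measure.dirac_prod, Measure.map_map hf measurable_prodMk_left]
    rfl
  have hjoint : P.map (fun ω => (Y ω, f (Y ω, Z ω))) = P.map Y ⊗ₘ κ := by
    have hg : Measurable fun q : α × β => (q.1, f q) := by fun_prop
    rw [show (fun ω => (Y ω, f (Y ω, Z ω))) = (fun q => (q.1, f q)) ∘ fun ω => (Y ω, Z ω) from rfl,
      ← AEMeasurable.map_map_of_aemeasurable hg.aemeasurable (hY.prodMk hZ),
      hYZ.map_prod_eq_prod_map_map hY hZ]
    ext s hs
    rw [Measure.map_apply hg hs, Measure.compProd_apply hs, Measure.prod_apply (hg hs)]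
    refine lintegral_congr fun y => ?_
    rw [hκ, Measure.map_apply (by fun_prop) (measurable_prodMk_left hs)]
    rfl
  filter_upwards [condDistrib_ae_eq_of_measure_eq_compProd Y
    (hf.comp_aemeasurable (hY.prodMk hZ)) hjoint] with y hy
  rw [hκ, AEMeasurable.map_map_of_aemeasurable (by fun_prop) hZ] at hy
  exact hy

variable {ι κ Ω : Type*} [Finite ι] [Fintype κ] [MeasurableSpace Ω] {P : Measure Ω}
  {X : Ω → ι → ℝ} {Y : Ω → κ → ℝ}

lemma hasGaussianLaw_sub_mulVec_prodMk (hXY : HasGaussianLaw (fun ω => (X ω, Y ω)) P)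
    (K : Matrix ι κ ℝ) : HasGaussianLaw (fun ω => (X ω - K *ᵥ Y ω, Y ω)) P := by
  cases nonempty_fintype ι
  exact hXY.map_fun ((ContinuousLinearMap.fst ℝ (ι → ℝ) (κ → ℝ) -
    K.mulVecLin.toContinuousLinearMap ∘L .snd ℝ _ _).prod (.snd ℝ _ _))

variable {K : Matrix ι κ ℝ}

lemma indepFun_sub_mulVec_of_normal_equation
    (hXY : HasGaussianLaw (fun ω => (X ω, Y ω)) P)
    (hK : K * crossCovMatrix Y Y P = crossCovMatrix X Y P) :
    IndepFun Y (fun ω => X ω - K *ᵥ Y ω) P := by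
  have := hXY.isProbabilityMeasure
  cases nonempty_fintype ι
  have hX2 : MemLp X 2 P := hXY.fst.memLp_two
  have hY2 : MemLp Y 2 P := hXY.snd.memLp_two
  have huncorrelated : crossCovMatrix (fun ω => X ω - K *ᵥ Y ω) Y P = 0 := by
    rw [crossCovMatrix_sub_left hX2 (memLp_mulVec K hY2) hY2,
      crossCovMatrix_mulVec_left K hY2 hY2, hK, sub_self]
  exact (HasGaussianLaw.indepFun_of_covariance_eval
    (X := fun i ω => (X ω - K *ᵥ Y ω) i) (Y := fun j ω => Y ω j)
    (hasGaussianLaw_sub_mulVec_prodMk hXY K) fun i j => congr_fun₂ huncorrelated i j).symm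

lemma condDistrib_ae_eq_map_add_mulVec_sub [IsFiniteMeasure P]
    (hXY : HasGaussianLaw (fun ω => (X ω, Y ω)) P)
    (hK : K * crossCovMatrix Y Y P = crossCovMatrix X Y P) :
    ∀ᵐ y ∂P.map Y, condDistrib X Y P y = P.map fun ω => X ω + K *ᵥ (y - Y ω) := by
  cases nonempty_fintype ι
  have hY : AEMeasurable Y P := hXY.snd.aemeasurable
  have hresidual : AEMeasurable (fun ω => X ω - K *ᵥ Y ω) P :=
    (hasGaussianLaw_sub_mulVec_prodMk hXY K).fst.aemeasurable
  have hrecombine : Measurable fun q : (κ → ℝ) × (ι → ℝ) => q.2 + K *ᵥ q.1 := by fun_prop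
  filter_upwards [condDistrib_ae_eq_map_of_indepFun (indepFun_sub_mulVec_of_normal_equation hXY hK)
    hY hresidual hrecombine] with y hy
  simpa only [sub_add_cancel, mulVec_sub, add_sub, sub_add_eq_add_sub] using hy

end Conditioning

lemma kalmanGain_normal_equation {ι κ : Type*} [Fintype ι] [Fintype κ] [DecidableEq κ]
    {S : Matrix ι ι ℝ} {R : Matrix κ κ ℝ} (hS : S.PosSemidef) (hR : R.PosDef) (H : Matrix κ ι ℝ) :
    S * Hᵀ * (H * S * Hᵀ + R)⁻¹ * (H * S * Hᵀ + R) = S * Hᵀ := by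
  have hprior : (H * S * Hᵀ).PosSemidef := by
    simpa only [conjTranspose_eq_transpose_of_trivial] using hS.mul_mul_conjTranspose_same H
  have hinnovation : (H * S * Hᵀ + R).PosDef := hR.posSemidef_add hprior
  exact nonsing_inv_mul_cancel_right _ _ hinnovation.det_pos.ne'.isUnit

theorem enkf_update_exact_general {ι κ Ω Ω' : Type*} [Fintype ι] [Fintype κ]
    [MeasurableSpace Ω] [MeasurableSpace Ω'] {P : Measure Ω} [IsFiniteMeasure P] {P' : Measure Ω'}
    {X : Ω → ι → ℝ} {W : Ω → κ → ℝ} (hX : HasGaussianLaw X P) (hW : HasGaussianLaw W P)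
    (hXW : IndepFun X W P) {H : Matrix κ ι ℝ} {K : Matrix ι κ ℝ}
    (hK : K * (H * crossCovMatrix X X P * Hᵀ + crossCovMatrix W W P) = crossCovMatrix X X P * Hᵀ)
    {Xb : Ω' → ι → ℝ} {Wb : Ω' → κ → ℝ}
    (hcopy : IdentDistrib (fun ω => (Xb ω, Wb ω)) (fun ω => (X ω, W ω)) P' P) :
    ∀ᵐ y ∂P.map fun ω => H *ᵥ X ω + W ω,
      P'.map (fun ω => Xb ω + K *ᵥ (y - (H *ᵥ Xb ω + Wb ω))) =
        condDistrib X (fun ω => H *ᵥ X ω + W ω) P y := by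
  have hXY : HasGaussianLaw (fun ω => (X ω, H *ᵥ X ω + W ω)) P :=
    (hXW.hasGaussianLaw hX hW).map_fun ((ContinuousLinearMap.fst ℝ (ι → ℝ) (κ → ℝ)).prod
      (H.mulVecLin.toContinuousLinearMap ∘L .fst ℝ _ _ + .snd ℝ _ _))
  have hnormal : K * crossCovMatrix (fun ω => H *ᵥ X ω + W ω) (fun ω => H *ᵥ X ω + W ω) P =
      crossCovMatrix X (fun ω => H *ᵥ X ω + W ω) P := by
    rw [crossCovMatrix_mulVec_add_self H hXW hX.memLp_two hW.memLp_two,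
      crossCovMatrix_mulVec_add H hXW hX.memLp_two hW.memLp_two, hK]
  filter_upwards [condDistrib_ae_eq_map_add_mulVec_sub hXY hnormal] with y hy
  have hupdate : Measurable fun q : (ι → ℝ) × (κ → ℝ) => q.1 + K *ᵥ (y - (H *ᵥ q.1 + q.2)) := by
    fun_prop
  rw [hy]
  exact (hcopy.comp hupdate).map_eq

/-- **Exactness of the EnKF Bayesian update in the linear Gaussian setting.**
Let `X ~ N(m, Σ)`, `W ~ N(0, R)` independent, `Y = HX + W`, and
`K = Σ Hᵀ (H Σ Hᵀ + R)⁻¹`. Let `X̄, W̄` be independent copies of `X, W` with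
`X̄`, `W̄`, `(X, W)` mutually independent, and `Ȳ = H X̄ + W̄`. Then for `P_Y`-a.e. `y`,
the law of `X̄_{|y} := X̄ + K (y − Ȳ)` equals the conditional distribution of `X`
given `Y = y`. -/
theorem enkf_update_exact {n p : ℕ} {Ω : Type*} [MeasurableSpace Ω]
    (P : Measure Ω) [IsProbabilityMeasure P]
    (X : Ω → Fin n → ℝ) (W : Ω → Fin p → ℝ)
    (hXm : Measurable X) (hWm : Measurable W)
    (m : Fin n → ℝ) (S : Matrix (Fin n) (Fin n) ℝ) (R : Matrix (Fin p) (Fin p) ℝ)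
    (hS : S.PosDef) (hR : R.PosDef)
    (hXlaw : P.map X = mvGaussian m S) (hWlaw : P.map W = mvGaussian 0 R)
    (hindep : IndepFun X W P)
    (H : Matrix (Fin p) (Fin n) ℝ)
    (Y : Ω → Fin p → ℝ) (hY : Y = fun ω => H.mulVec (X ω) + W ω)
    (K : Matrix (Fin n) (Fin p) ℝ) (hK : K = S * Hᵀ * (H * S * Hᵀ + R)⁻¹)
    (Xb : Ω → Fin n → ℝ) (Wb : Ω → Fin p → ℝ)
    (hXbm : Measurable Xb) (hWbm : Measurable Wb)
    (hXblaw : P.map Xb = P.map X) (hWblaw : P.map Wb = P.map W)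
    -- `X̄`, `W̄`, and `(X, W)` are mutually independent:
    (hindep1 : IndepFun Xb Wb P)
    (hindep2 : IndepFun (fun ω => (Xb ω, Wb ω)) (fun ω => (X ω, W ω)) P)
    (Yb : Ω → Fin p → ℝ) (hYb : Yb = fun ω => H.mulVec (Xb ω) + Wb ω) :
    ∀ᵐ y ∂(P.map Y),
      P.map (fun ω => Xb ω + K.mulVec (y - Yb ω)) = condDistrib X Y P y := by
  have hX : HasLaw X (mvGaussian m S) P := ⟨hXm.aemeasurable, hXlaw⟩
  have hW : HasLaw W (mvGaussian 0 R) P := ⟨hWm.aemeasurable, hWlaw⟩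
  have := isGaussian_mvGaussian m hS
  have := isGaussian_mvGaussian 0 hR
  have hcopy : IdentDistrib (fun ω => (Xb ω, Wb ω)) (fun ω => (X ω, W ω)) P P :=
    IdentDistrib.prodMk ⟨hXbm.aemeasurable, hXm.aemeasurable, hXblaw⟩
      ⟨hWbm.aemeasurable, hWm.aemeasurable, hWblaw⟩ hindep1 hindep
  subst hY hYb hK
  refine enkf_update_exact_general hX.hasGaussianLaw hW.hasGaussianLaw hindep ?_ hcopy
  rw [crossCovMatrix_of_hasLaw_mvGaussian hS hX, crossCovMatrix_of_hasLaw_mvGaussian hR hW]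
  exact kalmanGain_normal_equation hS.posSemidef hR H
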